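/- arXiv:2206.02348 — 2 statements merged into one kernel-verified Lean document; each statement's English description precedes it below -/
import Mathlib

section
/- For every integer k ≥ 3, the k-th absolute moment of the score of an r-smoothed density satisfies E_{x~f_r}[|s_r(x)|^k] ≤ (1.6/r)^{k−2} · k^{k/2} · I_r. -/
/-!
Write `g = f_r`, `s = g' / g` and `A n = E|s|ⁿ = ∫ |s|ⁿ g`.

The score of a smoothed density satisfies `s' ≥ -1 / r²` (`smoothed_second_deriv_ge`), because
`s' = Var(Z | X) / r⁴ - 1 / r²`. Since `(|s|ⁿ s g)' = (n + 1) |s|ⁿ s' g + |s|ⁿ⁺² g`, integrating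
over the line gives the recursion `A (n + 2) ≤ (n + 1) / r² · A n` (`moment_step`).

The boundary terms are handled without tail estimates: `|s|ⁿ s g` is integrable as soon as
`|s|ⁿ⁺¹ g` is, so its values at `±R` become arbitrarily small along some `R → ∞`, and this is
enough since `∫_{-R}^R |s|ⁿ⁺² g` is monotone in `R`. The same bound yields integrability of
`|s|ⁿ⁺² g`, so that all moments are finite by induction, starting from the integrability of
`g` and `g'`.

For even `k` the recursion descends to `A 2 = I_r`. For odd `k` it descends to `A 3`, and
`A 3 ≤ (A 2 / r + r · A 4) / 2 ≤ 2 / r · A 2` by the arithmetic-geometric mean inequality. The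
constants `1.6 ^ (k - 2) * k ^ (k / 2)` grow faster than the recursion requires (`moment_growth`).
-/

open MeasureTheory Real

noncomputable section

/-- The Gaussian density with mean 0 and variance `r ^ 2`. -/
def gaussPdf (r x : ℝ) : ℝ :=
  Real.exp (-(x ^ 2) / (2 * r ^ 2)) / Real.sqrt (2 * Real.pi * r ^ 2)

/-- The `r`-smoothed density `f_r`, i.e. the density of `Y + Z` where `Y ~ f` and
`Z ~ N(0, r²)` independent. -/
def smoothed (f : ℝ → ℝ) (r x : ℝ) : ℝ := ∫ y, f y * gaussPdf r (x - y)

/-- The score function `s_r = f_r' / f_r` of the smoothed density. -/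
def score (f : ℝ → ℝ) (r x : ℝ) : ℝ :=
  deriv (fun t => smoothed f r t) x / smoothed f r x

/-- The Fisher information `I_r = E_{x ~ f_r}[s_r(x)²]` of the smoothed density. -/
def fisherInfo (f : ℝ → ℝ) (r : ℝ) : ℝ := ∫ x, score f r x ^ 2 * smoothed f r x

/-- `f` is a probability density on `ℝ`. -/
def IsDensity (f : ℝ → ℝ) : Prop :=
  (∀ x, 0 ≤ f x) ∧ MeasureTheory.Integrable f ∧ (∫ x, f x) = 1


/-! ### Moment recursion for a score with one-sided bounded derivative -/

theorem hasDerivAt_abs_pow_mul_self (n : ℕ) (t : ℝ) :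
    HasDerivAt (fun t : ℝ => |t| ^ n * t) ((n + 1) * |t| ^ n) t := by
  induction n using Nat.twoStepInduction with
  | zero => simpa using hasDerivAt_id' t
  | one =>
    rcases lt_trichotomy t 0 with h | h | h
    · have h1 : HasDerivAt (fun t : ℝ => |t|) (-1) t := hasDerivAt_abs_neg h
      have := h1.mul (hasDerivAt_id t)
      simp only [pow_one]
      refine this.congr_deriv ?_
      simp [abs_of_neg h]; ring
    · subst h
      rw [hasDerivAt_iff_tendsto_slope_zero]
      have h0 : Filter.Tendsto (fun t : ℝ => |t|) (nhdsWithin 0 {0}ᶜ) (nhds 0) := by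
        have : Filter.Tendsto (fun t : ℝ => |t|) (nhds 0) (nhds |0|) :=
          continuous_abs.tendsto 0
        rw [abs_zero] at this
        exact this.mono_left nhdsWithin_le_nhds
      simp only [abs_zero, pow_one, mul_zero]
      refine h0.congr' ?_
      filter_upwards [self_mem_nhdsWithin] with x hx
      have hx' : x ≠ 0 := hx
      simp
      field_simp
    · have h1 : HasDerivAt (fun t : ℝ => |t|) 1 t := hasDerivAt_abs_pos h
      have := h1.mul (hasDerivAt_id t)
      simp only [pow_one]
      refine this.congr_deriv ?_
      simp [abs_of_pos h]; ring
  | more n ih _ =>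
    have e : (fun t : ℝ => |t| ^ (n + 2) * t) = fun t : ℝ => t ^ 2 * (|t| ^ n * t) := by
      funext t
      rw [pow_add, sq_abs]; ring
    rw [e]
    refine ((hasDerivAt_pow 2 t).mul ih).congr_deriv ?_
    rw [pow_add, sq_abs]; push_cast; ring

theorem exists_ge_abs_add_abs_neg_lt {h : ℝ → ℝ} (hh : Integrable h) (R₀ : ℝ) {ε : ℝ}
    (hε : 0 < ε) : ∃ R, R₀ ≤ R ∧ |h R| + |h (-R)| < ε := by
  by_contra! H
  have hm : Integrable (fun R => |h R| + |h (-R)|) := hh.abs.add hh.comp_neg.abs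
  have hc : IntegrableOn (fun _ : ℝ => ε) (Set.Ici R₀) := by
    refine Integrable.mono' hm.integrableOn aestronglyMeasurable_const ?_
    filter_upwards [ae_restrict_mem measurableSet_Ici] with x hx
    rw [Real.norm_eq_abs, abs_of_pos hε]
    exact H x hx
  rw [integrableOn_const_iff] at hc
  simp [hε.ne'] at hc

/-- The moment recursion `E|s|ⁿ⁺² ≤ (n + 1) c E|s|ⁿ` for the score `s = g₁ / g` of a positive
density `g` (with `g₁ = g'`, `g₂ = g''`) whose score satisfies `s' ≥ -c`; that inequality is
hypothesis `hineq`, cleared of denominators. Integrability of the left-hand side is part of the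
conclusion. The proof integrates `(|s|ⁿ s g)' = (n + 1) |s|ⁿ s' g + |s|ⁿ⁺² g` over `[-R, R]`. -/
theorem moment_step {g g₁ g₂ : ℝ → ℝ} {c : ℝ} (hc : 0 ≤ c) (hpos : ∀ x, 0 < g x)
    (hg : ∀ x, HasDerivAt g (g₁ x) x) (hg₁ : ∀ x, HasDerivAt g₁ (g₂ x) x)
    (hg₂ : Continuous g₂) (hineq : ∀ x, g₁ x ^ 2 / g x - c * g x ≤ g₂ x) (n : ℕ)
    (hn : Integrable fun x => |g₁ x / g x| ^ n * g x)
    (hn1 : Integrable fun x => |g₁ x / g x| ^ (n + 1) * g x) :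
    Integrable (fun x => |g₁ x / g x| ^ (n + 2) * g x) ∧
      ∫ x, |g₁ x / g x| ^ (n + 2) * g x ≤ (n + 1) * c * ∫ x, |g₁ x / g x| ^ n * g x := by
  have cg : Continuous g := continuous_iff_continuousAt.2 fun x => (hg x).continuousAt
  have cg₁ : Continuous g₁ := continuous_iff_continuousAt.2 fun x => (hg₁ x).continuousAt
  have cs : Continuous fun x => g₁ x / g x := cg₁.div cg fun x => (hpos x).ne'
  have cm : ∀ m : ℕ, Continuous fun x => |g₁ x / g x| ^ m * g x := fun m =>
    (cs.abs.pow m).mul cg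
  have nonneg : ∀ (m : ℕ) x, 0 ≤ |g₁ x / g x| ^ m * g x := fun m x =>
    mul_nonneg (by positivity) (hpos x).le
  set h : ℝ → ℝ := fun x => |g₁ x / g x| ^ n * (g₁ x / g x) * g x with hh
  set h' : ℝ → ℝ := fun x => (n + 1) * |g₁ x / g x| ^ n * (g₂ x - g₁ x ^ 2 / g x)
    + |g₁ x / g x| ^ (n + 2) * g x with hh'
  have ch : Continuous h := ((cs.abs.pow n).mul cs).mul cg
  have ch' : Continuous h' :=
    ((continuous_const.mul (cs.abs.pow n)).mul
      (hg₂.sub ((cg₁.pow 2).div cg fun x => (hpos x).ne'))).add (cm _)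
  have dh : ∀ x, HasDerivAt h (h' x) x := by
    intro x
    have hx := (hpos x).ne'
    have ds := (hg₁ x).div (hg x) hx
    have dψ := (hasDerivAt_abs_pow_mul_self n (g₁ x / g x)).comp x ds
    refine (dψ.mul (hg x)).congr_deriv ?_
    simp only [hh', pow_add, sq_abs, Function.comp, Pi.div_apply]
    field_simp
  have ih : Integrable h := by
    refine hn1.mono' ch.aestronglyMeasurable (ae_of_all _ fun x => le_of_eq ?_)
    rw [Real.norm_eq_abs, hh]
    simp only [abs_mul, abs_pow, abs_abs, abs_of_pos (hpos x)]
    ring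
  set I := (n + 1) * c * ∫ x, |g₁ x / g x| ^ n * g x with hI
  have bound : ∀ R : ℝ, 0 ≤ R → ∫ x in (-R)..R, |g₁ x / g x| ^ (n + 2) * g x ≤ I := by
    intro R hR
    refine le_of_forall_pos_le_add fun ε hε => ?_
    obtain ⟨S, hRS, hS⟩ := exists_ge_abs_add_abs_neg_lt ih R hε
    have hS0 : 0 ≤ S := hR.trans hRS
    have e1 : ∫ x in (-R)..R, |g₁ x / g x| ^ (n + 2) * g x
        ≤ ∫ x in (-S)..S, |g₁ x / g x| ^ (n + 2) * g x :=
      intervalIntegral.integral_mono_interval (by linarith) (by linarith) hRS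
        (ae_of_all _ (nonneg _)) ((cm _).intervalIntegrable _ _)
    have e2 : ∫ x in (-S)..S, |g₁ x / g x| ^ (n + 2) * g x
        ≤ ∫ x in (-S)..S, (h' x + (n + 1) * c * (|g₁ x / g x| ^ n * g x)) := by
      refine intervalIntegral.integral_mono_on (by linarith) ((cm _).intervalIntegrable _ _)
        ((ch'.add (continuous_const.mul (cm n))).intervalIntegrable _ _) fun x _ => ?_
      have h1 : 0 ≤ ((n : ℝ) + 1) * |g₁ x / g x| ^ n := by positivity
      have h2 := mul_le_mul_of_nonneg_left (hineq x) h1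
      simp only [hh']
      linarith
    have e3 : ∫ x in (-S)..S, (h' x + (n + 1) * c * (|g₁ x / g x| ^ n * g x))
        = h S - h (-S) + (n + 1) * c * ∫ x in (-S)..S, |g₁ x / g x| ^ n * g x := by
      rw [intervalIntegral.integral_add (ch'.intervalIntegrable _ _)
        (((cm n).const_mul _).intervalIntegrable _ _),
        intervalIntegral.integral_const_mul,
        intervalIntegral.integral_eq_sub_of_hasDerivAt (fun x _ => dh x)
          (ch'.intervalIntegrable _ _)]
    have e4 : ∫ x in (-S)..S, |g₁ x / g x| ^ n * g x ≤ ∫ x, |g₁ x / g x| ^ n * g x := by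
      rw [intervalIntegral.integral_of_le (by linarith)]
      exact setIntegral_le_integral hn (ae_of_all _ (nonneg n))
    have e5 := mul_le_mul_of_nonneg_left e4 (show 0 ≤ ((n : ℝ) + 1) * c by positivity)
    have e6 := le_abs_self (h S)
    have e7 := neg_abs_le (h (-S))
    rw [hI]
    linarith
  have ta : Filter.Tendsto (fun N : ℕ => -(N : ℝ)) Filter.atTop Filter.atBot :=
    Filter.tendsto_neg_atTop_atBot.comp tendsto_natCast_atTop_atTop
  have tb : Filter.Tendsto (fun N : ℕ => (N : ℝ)) Filter.atTop Filter.atTop :=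
    tendsto_natCast_atTop_atTop
  have int : Integrable (fun x => |g₁ x / g x| ^ (n + 2) * g x) := by
    refine integrable_of_intervalIntegral_norm_bounded I
      (fun N => ((cm _).integrableOn_Icc).mono_set Set.Ioc_subset_Icc_self) ta tb
      (Filter.Eventually.of_forall fun N => ?_)
    simp only [Real.norm_of_nonneg (nonneg _ _)]
    exact bound N (Nat.cast_nonneg N)
  exact ⟨int, le_of_tendsto' (intervalIntegral_tendsto_integral int ta tb)
    fun N => bound N (Nat.cast_nonneg N)⟩

theorem moment_integrable {g g₁ g₂ : ℝ → ℝ} {c : ℝ} (hc : 0 ≤ c) (hpos : ∀ x, 0 < g x)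
    (hg : ∀ x, HasDerivAt g (g₁ x) x) (hg₁ : ∀ x, HasDerivAt g₁ (g₂ x) x)
    (hg₂ : Continuous g₂) (hineq : ∀ x, g₁ x ^ 2 / g x - c * g x ≤ g₂ x)
    (ig : Integrable g) (ig₁ : Integrable g₁) (n : ℕ) :
    Integrable fun x => |g₁ x / g x| ^ n * g x := by
  induction n using Nat.twoStepInduction with
  | zero => simpa using ig
  | one =>
    refine ig₁.abs.congr (ae_of_all _ fun x => ?_)
    have := (hpos x).ne'
    simp only [pow_one, abs_div, abs_of_pos (hpos x)]
    field_simp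
  | more n h0 h1 => exact (moment_step hc hpos hg hg₁ hg₂ hineq n h0 h1).1

/-! ### Solving the recursion -/

theorem numeric_step (n : ℕ) :
    ((n : ℝ) + 1) * (n : ℝ) ^ ((n : ℝ) / 2) ≤
      1.6 ^ 2 * ((n + 2 : ℕ) : ℝ) ^ (((n + 2 : ℕ) : ℝ) / 2) := by
  have hn : (0 : ℝ) ≤ n := Nat.cast_nonneg n
  have e : (((n + 2 : ℕ) : ℝ) / 2) = (n : ℝ) / 2 + 1 := by push_cast; ring
  rw [e, Real.rpow_add_one (by positivity)]
  have h1 : (n : ℝ) ^ ((n : ℝ) / 2) ≤ ((n + 2 : ℕ) : ℝ) ^ ((n : ℝ) / 2) :=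
    Real.rpow_le_rpow hn (by push_cast; linarith) (by positivity)
  have h2 : 0 ≤ ((n + 2 : ℕ) : ℝ) ^ ((n : ℝ) / 2) := by positivity
  push_cast at h1 h2 ⊢
  nlinarith [mul_le_mul_of_nonneg_left h1 (show 0 ≤ (n : ℝ) + 1 by linarith),
    mul_nonneg hn h2]

/-- A sequence `A` of moments with `A (n + 2) ≤ (n + 1) / r² · A n` and with the interpolation
bound `A 3 ≤ (A 2 / r + r · A 4) / 2` satisfies the
bound claimed for the score moments at every index `n + 2`. -/
theorem moment_growth {A : ℕ → ℝ} {r : ℝ} (hr : 0 < r) (hA : 0 ≤ A 2)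
    (hstep : ∀ n, A (n + 2) ≤ (n + 1) * (1 / r ^ 2) * A n)
    (h3 : A 3 ≤ (A 2 / r + r * A 4) / 2) (n : ℕ) :
    A (n + 2) ≤ (1.6 / r) ^ n * ((n + 2 : ℕ) : ℝ) ^ (((n + 2 : ℕ) : ℝ) / 2) * A 2 := by
  induction n using Nat.twoStepInduction with
  | zero => norm_num; linarith
  | one =>
    have h4 := hstep 2
    have h5 : A 3 ≤ 2 / r * A 2 := by
      refine h3.trans ?_
      have : r * A 4 ≤ r * (((2 : ℕ) + 1) * (1 / r ^ 2) * A 2) :=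
        mul_le_mul_of_nonneg_left h4 hr.le
      have e : r * (((2 : ℕ) + 1) * (1 / r ^ 2) * A 2) = 3 * (A 2 / r) := by
        push_cast; field_simp; ring
      have e' : 2 / r * A 2 = 2 * (A 2 / r) := by ring
      rw [e] at this; rw [e']; linarith
    refine h5.trans ?_
    have h6 : (3 : ℝ) ≤ (3 : ℝ) ^ ((3 : ℝ) / 2) := by
      conv_lhs => rw [← Real.rpow_one 3]
      exact Real.rpow_le_rpow_of_exponent_le (by norm_num) (by norm_num)
    refine mul_le_mul_of_nonneg_right ?_ hA
    norm_num only [pow_one, Nat.cast_ofNat, Nat.reduceAdd]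
    rw [div_mul_eq_mul_div]
    refine div_le_div_of_nonneg_right ?_ hr.le
    linarith
  | more n ih _ =>
    have hr2 : 0 ≤ 1 / r ^ 2 := by positivity
    have hn : (0 : ℝ) ≤ n := Nat.cast_nonneg n
    refine (hstep (n + 2)).trans ?_
    refine (mul_le_mul_of_nonneg_left ih (by positivity)).trans ?_
    have h := numeric_step (n + 2)
    have hq : 0 ≤ (1.6 / r) ^ n * (1 / r ^ 2) * A 2 := by positivity
    have h' := mul_le_mul_of_nonneg_left h hq
    have e : (1.6 / r) ^ (n + 2) = (1.6 / r) ^ n * (1.6 ^ 2 * (1 / r ^ 2)) := by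
      rw [pow_add]; field_simp
    rw [e]
    linarith

/-! ### Smoothing by convolution -/

theorem integrable_smoothing_integrand {f q : ℝ → ℝ} {C : ℝ} (hf : Integrable f)
    (cq : Continuous q) (bq : ∀ u, |q u| ≤ C) (x : ℝ) :
    Integrable fun y => f y * q (x - y) :=
  hf.mul_bdd (c := C) (cq.comp (continuous_const.sub continuous_id)).aestronglyMeasurable
    (ae_of_all _ fun y => bq (x - y))

theorem hasDerivAt_smoothing {f q q' : ℝ → ℝ} {C C' : ℝ} (hf : Integrable f)
    (hq : ∀ u, HasDerivAt q (q' u) u) (cq' : Continuous q') (bq : ∀ u, |q u| ≤ C)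
    (bq' : ∀ u, |q' u| ≤ C') (x : ℝ) :
    HasDerivAt (fun x => ∫ y, f y * q (x - y)) (∫ y, f y * q' (x - y)) x := by
  have cq : Continuous q := continuous_iff_continuousAt.2 fun x => (hq x).continuousAt
  refine (hasDerivAt_integral_of_dominated_loc_of_deriv_le (bound := fun y => |f y| * C')
    (F := fun x y => f y * q (x - y)) (F' := fun x y => f y * q' (x - y))
    Filter.univ_mem
    (Filter.Eventually.of_forall fun x =>
      (integrable_smoothing_integrand hf cq bq x).aestronglyMeasurable)
    (integrable_smoothing_integrand hf cq bq x)
    (integrable_smoothing_integrand hf cq' bq' x).aestronglyMeasurable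
    (ae_of_all _ fun y z _ => ?_) (hf.abs.mul_const C') (ae_of_all _ fun y z _ => ?_)).2
  · rw [Real.norm_eq_abs, abs_mul]
    exact mul_le_mul_of_nonneg_left (bq' _) (abs_nonneg _)
  · exact ((hq (z - y)).comp_sub_const z y).const_mul (f y)

theorem continuous_smoothing {f q : ℝ → ℝ} {C : ℝ} (hf : Integrable f)
    (cq : Continuous q) (bq : ∀ u, |q u| ≤ C) :
    Continuous fun x => ∫ y, f y * q (x - y) := by
  refine continuous_of_dominated (bound := fun y => |f y| * C)
    (fun x => (integrable_smoothing_integrand hf cq bq x).aestronglyMeasurable)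
    (fun x => ae_of_all _ fun y => ?_) (hf.abs.mul_const C) (ae_of_all _ fun y => ?_)
  · rw [Real.norm_eq_abs, abs_mul]
    exact mul_le_mul_of_nonneg_left (bq _) (abs_nonneg _)
  · exact continuous_const.mul (cq.comp (continuous_id.sub continuous_const))

theorem integrable_smoothing {f q : ℝ → ℝ} (hf : Integrable f) (hq : Integrable q) :
    Integrable fun x => ∫ y, f y * q (x - y) :=
  hf.integrable_convolution (ContinuousLinearMap.mul ℝ ℝ) hq

/-! ### Gaussian kernel and its derivatives -/

/-- The first derivative of `gaussPdf r`. -/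
def gaussPdf₁ (r u : ℝ) : ℝ := -(u / r ^ 2) * gaussPdf r u

/-- The second derivative of `gaussPdf r`. -/
def gaussPdf₂ (r u : ℝ) : ℝ := (u ^ 2 / r ^ 4 - 1 / r ^ 2) * gaussPdf r u

theorem gaussPdf_pos {r : ℝ} (hr : 0 < r) (u : ℝ) : 0 < gaussPdf r u := by
  unfold gaussPdf; positivity

theorem hasDerivAt_gaussPdf {r : ℝ} (hr : 0 < r) (u : ℝ) :
    HasDerivAt (gaussPdf r) (gaussPdf₁ r u) u := by
  have h1 : HasDerivAt (fun x : ℝ => -(x ^ 2) / (2 * r ^ 2)) (-(2 * u) / (2 * r ^ 2)) u := by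
    simpa using ((hasDerivAt_pow 2 u).neg).div_const (2 * r ^ 2)
  refine (h1.exp.div_const (Real.sqrt (2 * Real.pi * r ^ 2))).congr_deriv ?_
  unfold gaussPdf₁ gaussPdf
  field_simp

theorem hasDerivAt_gaussPdf₁ {r : ℝ} (hr : 0 < r) (u : ℝ) :
    HasDerivAt (gaussPdf₁ r) (gaussPdf₂ r u) u := by
  have h1 : HasDerivAt (fun x : ℝ => -(x / r ^ 2)) (-(1 / r ^ 2)) u :=
    ((hasDerivAt_id' u).div_const _).neg
  refine (h1.mul (hasDerivAt_gaussPdf hr u)).congr_deriv ?_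
  unfold gaussPdf₂ gaussPdf₁
  field_simp
  ring

theorem continuous_gaussPdf {r : ℝ} (hr : 0 < r) : Continuous (gaussPdf r) :=
  continuous_iff_continuousAt.2 fun x => (hasDerivAt_gaussPdf hr x).continuousAt

theorem continuous_gaussPdf₁ {r : ℝ} (hr : 0 < r) : Continuous (gaussPdf₁ r) :=
  continuous_iff_continuousAt.2 fun x => (hasDerivAt_gaussPdf₁ hr x).continuousAt

theorem continuous_gaussPdf₂ {r : ℝ} (hr : 0 < r) : Continuous (gaussPdf₂ r) := by
  have := continuous_gaussPdf hr
  unfold gaussPdf₂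
  fun_prop

theorem exists_gaussPdf_bound {r : ℝ} (hr : 0 < r) :
    ∃ C, (∀ u, gaussPdf r u ≤ C) ∧ ∀ u, u ^ 2 * gaussPdf r u ≤ C := by
  set w := (Real.sqrt (2 * Real.pi * r ^ 2))⁻¹ with hw
  have hw0 : 0 ≤ w := by positivity
  have e : ∀ u, gaussPdf r u = Real.exp (-(u ^ 2 / (2 * r ^ 2))) * w := fun u => by
    rw [gaussPdf, neg_div, div_eq_mul_inv]
  refine ⟨w + 2 * r ^ 2 * w, fun u => ?_, fun u => ?_⟩
  · have h1 : Real.exp (-(u ^ 2 / (2 * r ^ 2))) ≤ 1 := by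
      rw [Real.exp_le_one_iff, neg_nonpos]; positivity
    have h2 : 0 ≤ 2 * r ^ 2 * w := by positivity
    rw [e]
    nlinarith [mul_le_mul_of_nonneg_right h1 hw0]
  · set t := u ^ 2 / (2 * r ^ 2) with ht
    have h1 : t * Real.exp (-t) ≤ 1 := by
      rw [Real.exp_neg, ← div_eq_mul_inv, div_le_one (Real.exp_pos t)]
      linarith [Real.add_one_le_exp t]
    have h2 : u ^ 2 = 2 * r ^ 2 * t := by rw [ht]; field_simp
    have h3 : 0 ≤ 2 * r ^ 2 * w := by positivity
    have h4 := mul_le_mul_of_nonneg_right h1 h3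
    rw [e, ← ht, h2]
    linarith

theorem exists_abs_gaussPdf_le {r : ℝ} (hr : 0 < r) :
    (∃ C, ∀ u, |gaussPdf r u| ≤ C) ∧ (∃ C, ∀ u, |gaussPdf₁ r u| ≤ C) ∧
      ∃ C, ∀ u, |gaussPdf₂ r u| ≤ C := by
  obtain ⟨C, h0, h2⟩ := exists_gaussPdf_bound hr
  refine ⟨⟨C, fun u => ?_⟩, ⟨C / r ^ 2, fun u => ?_⟩, ⟨C / r ^ 4 + C / r ^ 2, fun u => ?_⟩⟩
  · rw [abs_of_pos (gaussPdf_pos hr u)]; exact h0 u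
  · have hp := gaussPdf_pos hr u
    have h1 : |u| * gaussPdf r u ≤ C := by
      have hu : |u| ≤ (1 + u ^ 2) / 2 := by nlinarith [sq_nonneg (|u| - 1), sq_abs u]
      nlinarith [mul_le_mul_of_nonneg_right hu hp.le, h0 u, h2 u]
    have e : |gaussPdf₁ r u| = |u| * gaussPdf r u / r ^ 2 := by
      rw [gaussPdf₁, abs_mul, abs_neg, abs_div, abs_of_pos hp,
        abs_of_pos (show 0 < r ^ 2 by positivity)]
      ring
    rw [e]
    exact div_le_div_of_nonneg_right h1 (by positivity)
  · have hp := gaussPdf_pos hr u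
    have e : gaussPdf₂ r u = u ^ 2 * gaussPdf r u / r ^ 4 - gaussPdf r u / r ^ 2 := by
      rw [gaussPdf₂]; ring
    have a := div_le_div_of_nonneg_right (h2 u) (show 0 ≤ r ^ 4 by positivity)
    have b := div_le_div_of_nonneg_right (h0 u) (show 0 ≤ r ^ 2 by positivity)
    have a' : 0 ≤ u ^ 2 * gaussPdf r u / r ^ 4 := by positivity
    have b' : 0 ≤ gaussPdf r u / r ^ 2 := by positivity
    rw [e, abs_le]
    constructor <;> linarith

theorem integrable_gaussPdf {r : ℝ} (hr : 0 < r) : Integrable (gaussPdf r) := by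
  have h := (integrable_exp_neg_mul_sq (show 0 < 1 / (2 * r ^ 2) by positivity)).div_const
    (Real.sqrt (2 * Real.pi * r ^ 2))
  refine h.congr (ae_of_all _ fun u => ?_)
  simp only [gaussPdf]
  congr 2
  ring

theorem integrable_gaussPdf₁ {r : ℝ} (hr : 0 < r) : Integrable (gaussPdf₁ r) := by
  have h := (integrable_mul_exp_neg_mul_sq (show 0 < 1 / (2 * r ^ 2) by positivity)).const_mul
    (-(1 / r ^ 2) / Real.sqrt (2 * Real.pi * r ^ 2))
  refine h.congr (ae_of_all _ fun u => ?_)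
  have e : -(1 / (2 * r ^ 2)) * u ^ 2 = -(u ^ 2) / (2 * r ^ 2) := by ring
  simp only [gaussPdf₁, gaussPdf]
  rw [e]
  ring

/-! ### Positivity and score derivative of the smoothed density -/

theorem smoothed_pos {f : ℝ → ℝ} {r : ℝ} (hf : IsDensity f) (hr : 0 < r) (x : ℝ) :
    0 < smoothed f r x := by
  obtain ⟨h0, hi, h1⟩ := hf
  obtain ⟨C, hC⟩ := (exists_abs_gaussPdf_le hr).1
  have nn : 0 ≤ fun y => f y * gaussPdf r (x - y) := fun y =>
    mul_nonneg (h0 y) (gaussPdf_pos hr _).le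
  refine lt_of_le_of_ne (integral_nonneg nn) fun h => ?_
  have h2 := (integral_eq_zero_iff_of_nonneg nn
    (integrable_smoothing_integrand hi (continuous_gaussPdf hr) hC x)).1 h.symm
  have h3 : f =ᵐ[volume] 0 := by
    filter_upwards [h2] with y hy
    exact (mul_eq_zero.1 hy).resolve_right (gaussPdf_pos hr _).ne'
  rw [integral_congr_ae h3] at h1
  simp at h1

/-- The inequality `s_r' ≥ -1 / r²` for the score, in the form `f_r'² / f_r - f_r / r² ≤ f_r''`.
It says that the posterior variance of the noise `Z` given `X = x` is nonnegative. -/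
theorem smoothed_second_deriv_ge {f : ℝ → ℝ} {r : ℝ} (hf : IsDensity f) (hr : 0 < r) (x : ℝ) :
    (∫ y, f y * gaussPdf₁ r (x - y)) ^ 2 / smoothed f r x - 1 / r ^ 2 * smoothed f r x
      ≤ ∫ y, f y * gaussPdf₂ r (x - y) := by
  have hpos := smoothed_pos hf hr x
  obtain ⟨h0, hi, -⟩ := hf
  obtain ⟨⟨C, hC⟩, ⟨C₁, hC₁⟩, ⟨C₂, hC₂⟩⟩ := exists_abs_gaussPdf_le hr
  have i0 := integrable_smoothing_integrand hi (continuous_gaussPdf hr) hC x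
  have i1 := integrable_smoothing_integrand hi (continuous_gaussPdf₁ hr) hC₁ x
  have i2 := integrable_smoothing_integrand hi (continuous_gaussPdf₂ hr) hC₂ x
  have eg : smoothed f r x = ∫ y, f y * gaussPdf r (x - y) := rfl
  set g := smoothed f r x
  set g₁ := ∫ y, f y * gaussPdf₁ r (x - y) with hg₁
  set g₂ := ∫ y, f y * gaussPdf₂ r (x - y) with hg₂
  set s := g₁ / g with hs
  have key : 0 ≤ ∫ y, (f y * gaussPdf₂ r (x - y)
      + (1 / r ^ 2 + s ^ 2) * (f y * gaussPdf r (x - y))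
      - 2 * s * (f y * gaussPdf₁ r (x - y))) := by
    refine integral_nonneg fun y => ?_
    -- The integrand is the weighted square `f γ ((x - y) / r² + s)²`.
    have e : f y * gaussPdf₂ r (x - y) + (1 / r ^ 2 + s ^ 2) * (f y * gaussPdf r (x - y))
        - 2 * s * (f y * gaussPdf₁ r (x - y))
        = f y * gaussPdf r (x - y) * ((x - y) / r ^ 2 + s) ^ 2 := by
      unfold gaussPdf₂ gaussPdf₁
      ring
    simp only [Pi.zero_apply]
    rw [e]
    exact mul_nonneg (mul_nonneg (h0 y) (gaussPdf_pos hr _).le) (sq_nonneg _)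
  have i3 : Integrable fun y => f y * gaussPdf₂ r (x - y)
      + (1 / r ^ 2 + s ^ 2) * (f y * gaussPdf r (x - y)) := i2.add (i0.const_mul _)
  rw [integral_sub i3 (i1.const_mul _), integral_add i2 (i0.const_mul _), integral_const_mul, integral_const_mul, ← eg, ← hg₁,
    ← hg₂] at key
  have e1 : s * g = g₁ := by rw [hs]; field_simp
  have e2 : g₁ ^ 2 / g = s * g₁ := by rw [hs]; ring
  have e3 : s ^ 2 * g = s * g₁ := by rw [← e1]; ring
  rw [e2]
  linarith

/-! ### Moment bound -/

/-- Moment bound for the score of an `r`-smoothed density: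
`E_{x~f_r}[|s_r(x)|^k] ≤ (1.6/r)^(k−2) · k^(k/2) · I_r` for every integer `k ≥ 3`. -/
theorem score_moment_bound (f : ℝ → ℝ) (r : ℝ) (hf : IsDensity f) (hr : 0 < r)
    (k : ℕ) (hk : 3 ≤ k) :
    (∫ x, |score f r x| ^ k * smoothed f r x) ≤
      (1.6 / r) ^ (k - 2) * (k : ℝ) ^ ((k : ℝ) / 2) * fisherInfo f r := by
  obtain ⟨⟨C, hC⟩, ⟨C₁, hC₁⟩, ⟨C₂, hC₂⟩⟩ := exists_abs_gaussPdf_le hr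
  have hi := hf.2.1
  have hpos := smoothed_pos hf hr
  have hc : 0 ≤ 1 / r ^ 2 := by positivity
  have hg : ∀ x, HasDerivAt (smoothed f r) (∫ y, f y * gaussPdf₁ r (x - y)) x :=
    hasDerivAt_smoothing hi (hasDerivAt_gaussPdf hr) (continuous_gaussPdf₁ hr) hC hC₁
  have hg₁ := hasDerivAt_smoothing hi (hasDerivAt_gaussPdf₁ hr) (continuous_gaussPdf₂ hr) hC₁ hC₂
  have hg₂ := continuous_smoothing hi (continuous_gaussPdf₂ hr) hC₂
  have hineq := smoothed_second_deriv_ge hf hr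
  have ig : Integrable (smoothed f r) := integrable_smoothing hi (integrable_gaussPdf hr)
  have ig₁ := integrable_smoothing hi (integrable_gaussPdf₁ hr)
  have es : ∀ x, score f r x = (∫ y, f y * gaussPdf₁ r (x - y)) / smoothed f r x := fun x => by
    rw [score]; exact congrArg (· / smoothed f r x) (hg x).deriv
  have int : ∀ n : ℕ, Integrable fun x => |score f r x| ^ n * smoothed f r x := by
    simp only [es]
    exact moment_integrable hc hpos hg hg₁ hg₂ hineq ig ig₁
  have step : ∀ n : ℕ, ∫ x, |score f r x| ^ (n + 2) * smoothed f r x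
      ≤ (n + 1) * (1 / r ^ 2) * ∫ x, |score f r x| ^ n * smoothed f r x := by
    intro n
    have i0 := int n
    have i1 := int (n + 1)
    simp only [es] at i0 i1 ⊢
    exact (moment_step hc hpos hg hg₁ hg₂ hineq n i0 i1).2
  have h3 : ∫ x, |score f r x| ^ 3 * smoothed f r x
      ≤ ((∫ x, |score f r x| ^ 2 * smoothed f r x) / r
        + r * ∫ x, |score f r x| ^ 4 * smoothed f r x) / 2 := by
    rw [← integral_div, ← integral_const_mul,
      ← integral_add ((int 2).div_const r) ((int 4).const_mul r), ← integral_div]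
    refine integral_mono (int 3) ((((int 2).div_const r).add ((int 4).const_mul r)).div_const 2)
      fun x => ?_
    -- Weighted AM-GM: `2 |s|³ ≤ s² / r + r s⁴`.
    have e : (|score f r x| ^ 2 * smoothed f r x / r + r * (|score f r x| ^ 4 * smoothed f r x)) / 2
        - |score f r x| ^ 3 * smoothed f r x
        = |score f r x| ^ 2 * smoothed f r x / r * (1 - r * |score f r x|) ^ 2 / 2 := by
      field_simp
      ring
    have := hpos x
    have h : 0 ≤ |score f r x| ^ 2 * smoothed f r x / r * (1 - r * |score f r x|) ^ 2 / 2 := by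
      positivity
    linarith
  have hF : fisherInfo f r = ∫ x, |score f r x| ^ 2 * smoothed f r x := by
    simp only [fisherInfo, sq_abs]
  obtain ⟨n, rfl⟩ := Nat.exists_eq_add_of_le' (show 2 ≤ k by omega)
  rw [hF, Nat.add_sub_cancel]
  exact moment_growth (A := fun k => ∫ x, |score f r x| ^ k * smoothed f r x) hr
    (integral_nonneg fun x => mul_nonneg (by positivity) (hpos x).le) step h3 n

end
end

section
/- For every x ∈ ℝ with f_r(x) > 0, every integer k ≥ 3, and every ε with −r/2 ≤ ε ≤ 0: if s_r(x+ε) ≥ (2 + 1.2√k)/r, then f_r(x)·|s_r(x+ε)|^k ≤ (1/4)·( f_r(x−r)·|s_r(x+ε−r)|^k + f_r(x+r)·|s_r(x+ε+r)|^k ). -/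
/-! The log-Laplace transform of a measure is convex, so `log f_r(t) + t² / (2 r²)`, which is
such a transform up to an additive constant, is a differentiable convex function `G` on `ℝ`,
with `s_r(t) = G'(t) - t / r²`. Put `S = r s_r(x+ε) ≥ 2 + 1.2 √k`. Monotonicity of `G'` yields

* `r s_r(x+ε+r) ≥ S - 1`, and
* `f_r(x+r) ≥ e^{S + ε/r - 1/2} f_r(x) ≥ e^{S-1} f_r(x)` (tangent line of `G` at `x`).

The right-hand neighbour alone therefore suffices once `e^{S-1} (1 - 1/S)^k ≥ 4`. By
`1 - 1/S ≥ e^{-1/(S-1)}` and `k ≤ ((S-2)/1.2)²` the logarithm of the left side is at least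
`(S-1) - (S-2)/1.44 ≥ 1 + 0.3 (S-2) ≥ 1.6 > log 4`. -/

open MeasureTheory Real

noncomputable section

/-- The smoothed density is `exp (G t - t² / (2 r²))` for a differentiable convex `G`: the cumulant
generating function of `y ↦ y / r²` under the finite measure `f(y) e^{-y²/(2r²)} dy`, shifted by
the logarithm of the Gaussian normalization. -/
lemma exists_convex_log_smoothed (f : ℝ → ℝ) (r : ℝ) (hf : IsDensity f) (hr : 0 < r)
    (x : ℝ) (hx : 0 < smoothed f r x) :
    ∃ G : ℝ → ℝ, Differentiable ℝ G ∧ ConvexOn ℝ Set.univ G ∧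
      ∀ t, smoothed f r t = Real.exp (G t - t ^ 2 / (2 * r ^ 2)) := by
  obtain ⟨hf0, hfi, -⟩ := hf
  set w : ℝ → ℝ := fun y => f y * Real.exp (-(y ^ 2) / (2 * r ^ 2)) with hw
  have hw0 : ∀ y, 0 ≤ w y := fun y => mul_nonneg (hf0 y) (Real.exp_pos _).le
  have hwm : AEMeasurable (fun y => ENNReal.ofReal (w y)) volume :=
    (hfi.aemeasurable.mul (by fun_prop)).ennreal_ofReal
  set μ : Measure ℝ := volume.withDensity (fun y => ENNReal.ofReal (w y)) with hμ
  set X : ℝ → ℝ := fun y => y / r ^ 2 with hX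
  -- Completing the square bounds the tilted weight by a constant multiple of `f`.
  have hint : ∀ t, Integrable (fun y => w y * Real.exp (t * X y)) volume := by
    intro t
    have h1 : ∀ y, w y * Real.exp (t * X y)
        = f y * Real.exp (-(y ^ 2) / (2 * r ^ 2) + t * X y) := by
      intro y
      rw [hw, Real.exp_add]; ring
    simp_rw [h1]
    refine hfi.mul_bdd (c := Real.exp (t ^ 2 / (2 * r ^ 2))) (by fun_prop) ?_
    refine Filter.Eventually.of_forall fun y => ?_
    rw [Real.norm_eq_abs, Real.abs_exp, Real.exp_le_exp, hX]
    have : t ^ 2 / (2 * r ^ 2) - (-(y ^ 2) / (2 * r ^ 2) + t * (y / r ^ 2))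
        = (t - y) ^ 2 / (2 * r ^ 2) := by
      field_simp; ring
    have h2 : 0 ≤ (t - y) ^ 2 / (2 * r ^ 2) := by positivity
    linarith
  have hintμ : ∀ t, Integrable (fun y => Real.exp (t * X y)) μ := by
    intro t
    rw [hμ, integrable_withDensity_iff_integrable_smul₀' hwm (by simp)]
    refine (hint t).congr (Filter.Eventually.of_forall fun y => ?_)
    simp [ENNReal.toReal_ofReal (hw0 y)]
  have hmgf : ∀ t, ProbabilityTheory.mgf X μ t = ∫ y, w y * Real.exp (t * X y) := by
    intro t
    rw [ProbabilityTheory.mgf, hμ,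
      integral_withDensity_eq_integral_toReal_smul₀ hwm (by simp)]
    refine integral_congr_ae (Filter.Eventually.of_forall fun y => ?_)
    simp [ENNReal.toReal_ofReal (hw0 y)]
  set c : ℝ := Real.sqrt (2 * Real.pi * r ^ 2) with hc
  have hc0 : 0 < c := by positivity
  have hsm : ∀ t, smoothed f r t
      = ProbabilityTheory.mgf X μ t * (Real.exp (-(t ^ 2) / (2 * r ^ 2)) / c) := by
    intro t
    rw [hmgf, ← integral_mul_const, smoothed]
    refine integral_congr_ae (Filter.Eventually.of_forall fun y => ?_)
    have : -((t - y) ^ 2) / (2 * r ^ 2)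
        = -(y ^ 2) / (2 * r ^ 2) + t * (y / r ^ 2) + -(t ^ 2) / (2 * r ^ 2) := by
      field_simp; ring
    simp only [gaussPdf, hw, hX]
    rw [this, Real.exp_add, Real.exp_add]
    ring
  have hμ0 : μ ≠ 0 := by
    intro h
    rw [hsm, h] at hx
    simp at hx
  have hset : ∀ t, t ∈ interior (ProbabilityTheory.integrableExpSet X μ) := by
    have : ProbabilityTheory.integrableExpSet X μ = Set.univ := by
      ext t; simpa [ProbabilityTheory.integrableExpSet] using hintμ t
    simp [this]
  have han : ∀ t, AnalyticAt ℝ (ProbabilityTheory.cgf X μ) t := fun t =>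
    ProbabilityTheory.analyticAt_cgf (hset t)
  have hconv : ConvexOn ℝ Set.univ (ProbabilityTheory.cgf X μ) := by
    refine convexOn_univ_of_deriv2_nonneg (fun t => (han t).differentiableAt)
      (fun t => (han t).deriv.differentiableAt) fun t => ?_
    rw [← iteratedDeriv_eq_iterate, ProbabilityTheory.iteratedDeriv_two_cgf_eq_integral (hset t)]
    exact div_nonneg (integral_nonneg fun y => by positivity) ProbabilityTheory.mgf_nonneg
  refine ⟨fun t => ProbabilityTheory.cgf X μ t + -Real.log c,
    fun t => (han t).differentiableAt.add_const _, hconv.add_const _, fun t => ?_⟩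
  have : ProbabilityTheory.cgf X μ t + -Real.log c - t ^ 2 / (2 * r ^ 2)
      = ProbabilityTheory.cgf X μ t + -(t ^ 2) / (2 * r ^ 2) - Real.log c := by ring
  rw [hsm, this, Real.exp_sub, Real.exp_add, Real.exp_log hc0,
    ProbabilityTheory.exp_cgf (hμ := ⟨hμ0⟩) (hintμ t)]
  ring

/-- The numerical inequality `4 S ^ k ≤ e^{S-1} (S-1)^k`. -/
lemma four_mul_pow_le (S : ℝ) (k : ℕ) (hk : 3 ≤ k) (hS : 2 + 1.2 * Real.sqrt k ≤ S) :
    4 * S ^ k ≤ Real.exp (S - 1) * (S - 1) ^ k := by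
  have hk' : (3 : ℝ) ≤ k := by exact_mod_cast hk
  have hsq : Real.sqrt k ^ 2 = k := Real.sq_sqrt (by positivity)
  have h17 : 1.7 ≤ Real.sqrt k := Real.le_sqrt_of_sq_le (by norm_num; linarith)
  have hS4 : 4.04 ≤ S := by norm_num at *; linarith
  have hS1 : 0 < S - 1 := by norm_num at *; linarith
  have hkS : (k : ℝ) / (S - 1) ≤ (S - 2) / 1.44 := by
    rw [div_le_div_iff₀ hS1 (by norm_num), ← hsq]
    have h12 : 6 / 5 * Real.sqrt k ≤ S - 2 := by norm_num at hS ⊢; linarith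
    norm_num
    nlinarith [mul_self_le_mul_self (by positivity) h12]
  have hpow : S ^ k ≤ Real.exp (k / (S - 1)) * (S - 1) ^ k := by
    have h1 : S ≤ Real.exp (1 / (S - 1)) * (S - 1) := by
      have := mul_le_mul_of_nonneg_right (Real.add_one_le_exp (1 / (S - 1))) hS1.le
      rwa [add_mul, one_div_mul_cancel hS1.ne', one_mul, add_sub_cancel] at this
    calc S ^ k ≤ (Real.exp (1 / (S - 1)) * (S - 1)) ^ k :=
          pow_le_pow_left₀ (by linarith) h1 k
      _ = _ := by rw [mul_pow, ← Real.exp_nat_mul, mul_one_div]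
  have h4 : (4 : ℝ) * Real.exp (k / (S - 1)) ≤ Real.exp (S - 1) := by
    have h2 : (4 : ℝ) = Real.exp (2 * Real.log 2) := by
      rw [two_mul, Real.exp_add, Real.exp_log (by norm_num)]; norm_num
    rw [h2, ← Real.exp_add, Real.exp_le_exp]
    have := Real.log_two_lt_d9
    norm_num at *
    linarith
  calc 4 * S ^ k ≤ 4 * (Real.exp (k / (S - 1)) * (S - 1) ^ k) := by gcongr
    _ = 4 * Real.exp (k / (S - 1)) * (S - 1) ^ k := by ring
    _ ≤ _ := by gcongr

/-- Pointwise helper bound: if the score at `x + ε` is large (for `−r/2 ≤ ε ≤ 0`), then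
the weighted `k`-th power of the score at `x` is dominated by the two points `x ± r`. -/
theorem score_large_neg_eps_helper (f : ℝ → ℝ) (r : ℝ) (hf : IsDensity f) (hr : 0 < r)
    (x : ℝ) (hx : 0 < smoothed f r x) (k : ℕ) (hk : 3 ≤ k)
    (ε : ℝ) (hε0 : -(r / 2) ≤ ε) (hεr : ε ≤ 0)
    (hs : (2 + 1.2 * Real.sqrt k) / r ≤ score f r (x + ε)) :
    smoothed f r x * |score f r (x + ε)| ^ k ≤
      (1 / 4) * (smoothed f r (x - r) * |score f r (x + ε - r)| ^ k +
        smoothed f r (x + r) * |score f r (x + ε + r)| ^ k) := by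
  obtain ⟨G, hGd, hGc, hG⟩ := exists_convex_log_smoothed f r hf hr x hx
  have hscore : ∀ t, score f r t = deriv G t - t / r ^ 2 := by
    intro t
    have h1 : HasDerivAt (fun u => G u - u ^ 2 / (2 * r ^ 2)) (deriv G t - t / r ^ 2) t := by
      convert! (hGd t).hasDerivAt.sub ((hasDerivAt_pow 2 t).div_const (2 * r ^ 2)) using 1
      field_simp
      ring
    have h2 : (fun u => smoothed f r u) = fun u => Real.exp (G u - u ^ 2 / (2 * r ^ 2)) :=
      funext hG
    rw [score, h2, h1.exp.deriv, hG t, mul_div_cancel_left₀ _ (Real.exp_pos _).ne']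
  have hmono : Monotone (deriv G) :=
    fun a b hab => hGc.monotoneOn_deriv (fun t _ => hGd t) trivial trivial hab
  set s := score f r (x + ε) with hs_def
  set S := r * s with hS_def
  have hS : 2 + 1.2 * Real.sqrt k ≤ S := by
    rw [div_le_iff₀ hr] at hs
    linarith [mul_comm r s]
  have hsqrt : 0 ≤ Real.sqrt k := Real.sqrt_nonneg _
  have hS2 : 2 ≤ S := by norm_num at hS; linarith
  have hs0 : 0 < s := pos_of_mul_pos_right (by linarith : 0 < r * s) hr.le
  have hd : deriv G (x + ε) = s + (x + ε) / r ^ 2 := by rw [hs_def, hscore]; ring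
  have hnext : S - 1 ≤ r * score f r (x + ε + r) := by
    have h1 : deriv G (x + ε) ≤ deriv G (x + ε + r) := hmono (by linarith)
    have h2 : r * score f r (x + ε + r)
        = r * s - 1 + r * (deriv G (x + ε + r) - deriv G (x + ε)) := by
      rw [hscore, hd]; field_simp; ring
    have h3 : 0 ≤ r * (deriv G (x + ε + r) - deriv G (x + ε)) :=
      mul_nonneg hr.le (by linarith)
    linarith
  have hratio : smoothed f r x * Real.exp (S - 1) ≤ smoothed f r (x + r) := by
    have h1 : deriv G x ≤ (G (x + r) - G x) / r := by
      have := hGc.le_slope_of_hasDerivAt (x := x) (y := x + r) trivial trivial (by linarith)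
        (hGd x).hasDerivAt
      rwa [slope_def_field, add_sub_cancel_left] at this
    have h2 : deriv G (x + ε) ≤ deriv G x := hmono (by linarith)
    have h3 : r * (s + (x + ε) / r ^ 2) ≤ G (x + r) - G x := by
      rw [le_div_iff₀ hr] at h1
      rw [← hd]
      nlinarith
    have h4 : r * (s + (x + ε) / r ^ 2) = S + x / r + ε / r := by field_simp; ring
    have h5 : -(1 / 2) ≤ ε / r := by rw [le_div_iff₀ hr]; linarith
    have h6 : (x + r) ^ 2 / (2 * r ^ 2) = x ^ 2 / (2 * r ^ 2) + x / r + 1 / 2 := by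
      field_simp; ring
    rw [hG, hG, ← Real.exp_add, Real.exp_le_exp, h6]
    linarith
  have hnum := four_mul_pow_le S k hk hS
  have hprev : 0 ≤ smoothed f r (x - r) * |score f r (x + ε - r)| ^ k := by
    rw [hG]; positivity
  have habs : S - 1 ≤ r * |score f r (x + ε + r)| :=
    hnext.trans (mul_le_mul_of_nonneg_left (le_abs_self _) hr.le)
  -- Clearing the factor `r ^ k` reduces the claim to the dimensionless inequality `hnum`.
  have hmain : 4 * (smoothed f r x * s ^ k)
      ≤ smoothed f r (x + r) * |score f r (x + ε + r)| ^ k := by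
    refine le_of_mul_le_mul_right ?_ (pow_pos hr k)
    calc 4 * (smoothed f r x * s ^ k) * r ^ k = smoothed f r x * (4 * S ^ k) := by
          rw [hS_def, mul_pow]; ring
      _ ≤ smoothed f r x * (Real.exp (S - 1) * (S - 1) ^ k) := by gcongr
      _ = smoothed f r x * Real.exp (S - 1) * (S - 1) ^ k := by ring
      _ ≤ smoothed f r (x + r) * (r * |score f r (x + ε + r)|) ^ k := by
          have : 0 ≤ S - 1 := by linarith
          have : 0 ≤ smoothed f r (x + r) := by rw [hG]; positivity
          gcongr
      _ = _ := by rw [mul_pow]; ring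
  rw [abs_of_pos hs0]
  linarith


end
end
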